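/- arXiv:1309.7970 — 5 statements merged into one kernel-verified Lean document; each statement's English description precedes it below -/
import Mathlib

section
/- Let x₀ < ⋯ < xₙ be real nodes, let x̂₀ = x₀ < x̂₁ < ⋯ < x̂_{n−1} < x̂ₙ = xₙ, let y ∈ ℝ^{n+1}, and set z_k = z_k(x, x̂). Assume Λ(x̂)·‖z‖_∞ < 1, where Λ(x̂) is the Lebesgue constant of x̂ over [x₀, xₙ]. Then for every t ∈ [x₀, xₙ] distinct from all x̂_k there exists y′ ∈ ℝ^{n+1} such that q(t; x̂, y, λ(x)) = P_{y′}(t) and, for every k, |y′_k − y_k| ≤ ((|z_k| + Λ(x̂)‖z‖_∞)/(1 − Λ(x̂)‖z‖_∞))·|y_k|. -/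
/-!
Write `ℓ k` for the value at `t` of the `k`-th Lagrange basis polynomial of the nodes `xh`. Up to
the common factor `∏ j, (t - xh j)`, `ℓ k` is `lam xh k / (t - xh k)`, and
`lam x k = lam xh k * (1 + z k)`. Hence the second barycentric formula with weights `lam x` equals
`(∑ k, ℓ k * (1 + z k) * y k) / (1 + s)` with `s = ∑ k, ℓ k * z k`, because the `ℓ k` sum to `1`.
Since `|s| ≤ Λ ‖z‖ < 1`, the denominator does not vanish, and the value is the interpolant at `t`
of `y' k = (1 + z k) / (1 + s) * y k`. The bound follows from `y' k - y k = (z k - s) / (1 + s) * y k`.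
-/

/-- Barycentric weight `λ_k(x) = 1 / ∏_{j ≠ k} (x_k - x_j)`. -/
noncomputable def lam {n : ℕ} (x : Fin (n + 1) → ℝ) (k : Fin (n + 1)) : ℝ :=
  (∏ j ∈ Finset.univ.erase k, (x k - x j))⁻¹

/-- Relative error in the weights `z_k(x, x̂)`. -/
noncomputable def zk {n : ℕ} (x xh : Fin (n + 1) → ℝ) (k : Fin (n + 1)) : ℝ :=
  (lam x k - lam xh k) / lam xh k

/-- The second barycentric formula `q(t; x̂, y, w)`. -/
noncomputable def secondForm {n : ℕ} (xh y w : Fin (n + 1) → ℝ) (t : ℝ) : ℝ :=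
  (∑ k, w k * y k / (t - xh k)) / (∑ k, w k / (t - xh k))

/-- The Lebesgue constant of the node family `v` over the interval `[a, b]`. -/
noncomputable def leb {ι : Type*} [Fintype ι] [DecidableEq ι] (v : ι → ℝ) (a b : ℝ) : ℝ :=
  ⨆ t : Set.Icc a b, ∑ k, |(Lagrange.basis Finset.univ v k).eval (t : ℝ)|

/-- The supremum defining `leb` is over a continuous function on a compact interval, hence of a
bounded set, so it is not a junk value and bounds the Lebesgue function. -/
lemma lebesgueFunction_le_leb {ι : Type*} [Fintype ι] [DecidableEq ι] (v : ι → ℝ) {a b t : ℝ}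
    (ht : t ∈ Set.Icc a b) :
    ∑ k, |(Lagrange.basis Finset.univ v k).eval t| ≤ leb v a b := by
  have hc : Continuous fun t : ℝ => ∑ k, |(Lagrange.basis Finset.univ v k).eval t| :=
    continuous_finsetSum _ fun k _ => (Polynomial.continuous _).abs
  have hb := (isCompact_Icc (a := a) (b := b)).bddAbove_image hc.continuousOn
  rw [Set.image_eq_range] at hb
  exact le_ciSup (f := fun t : Set.Icc a b =>
    ∑ k, |(Lagrange.basis Finset.univ v k).eval (t : ℝ)|) hb ⟨t, ht⟩

lemma lam_ne_zero {n : ℕ} {x : Fin (n + 1) → ℝ} (hx : Function.Injective x) (k : Fin (n + 1)) :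
    lam x k ≠ 0 := by
  refine inv_ne_zero (Finset.prod_ne_zero_iff.2 fun j hj => sub_ne_zero.2 fun h => ?_)
  exact (Finset.ne_of_mem_erase hj) (hx h).symm

lemma lam_eq_mul_one_add_zk {n : ℕ} (x : Fin (n + 1) → ℝ) {xh : Fin (n + 1) → ℝ}
    (hxh : Function.Injective xh) (k : Fin (n + 1)) :
    lam x k = lam xh k * (1 + zk x xh k) := by
  have := lam_ne_zero hxh k
  unfold zk
  field_simp
  ring

lemma eval_basis_eq_lam {n : ℕ} (xh : Fin (n + 1) → ℝ) {t : ℝ} (k : Fin (n + 1))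
    (ht : t ≠ xh k) :
    (Lagrange.basis Finset.univ xh k).eval t =
      (Lagrange.nodal Finset.univ xh).eval t * (lam xh k / (t - xh k)) := by
  rw [Lagrange.eval_basis_not_at_node (Finset.mem_univ k) ht, Lagrange.nodalWeight,
    Finset.prod_inv_distrib, lam]
  ring

theorem stmt_6 {n : ℕ} (x xh y : Fin (n + 1) → ℝ)
    (hx : StrictMono x) (hxh : StrictMono xh)
    (h0 : xh 0 = x 0) (hn : xh (Fin.last n) = x (Fin.last n))
    (hsmall : leb xh (x 0) (x (Fin.last n)) *
      (Finset.univ.sup' Finset.univ_nonempty fun k => |zk x xh k|) < 1)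
    (t : ℝ) (ht : t ∈ Set.Icc (x 0) (x (Fin.last n))) (ht' : ∀ k, t ≠ xh k) :
    ∃ y' : Fin (n + 1) → ℝ,
      secondForm xh y (lam x) t = (Lagrange.interpolate Finset.univ xh y').eval t ∧
      ∀ k, |y' k - y k| ≤
        ((|zk x xh k| + leb xh (x 0) (x (Fin.last n)) *
            (Finset.univ.sup' Finset.univ_nonempty fun i => |zk x xh i|)) /
          (1 - leb xh (x 0) (x (Fin.last n)) *
            (Finset.univ.sup' Finset.univ_nonempty fun i => |zk x xh i|))) * |y k| := by
  have hleb := lebesgueFunction_le_leb xh ht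
  have hZ : ∀ k, |zk x xh k| ≤ Finset.univ.sup' Finset.univ_nonempty fun i => |zk x xh i| :=
    fun k => Finset.le_sup' (fun i => |zk x xh i|) (Finset.mem_univ k)
  set Z := Finset.univ.sup' Finset.univ_nonempty fun i => |zk x xh i|
  set Λ := leb xh (x 0) (x (Fin.last n))
  set ℓ : Fin (n + 1) → ℝ := fun k => (Lagrange.basis Finset.univ xh k).eval t with hℓ
  set z := zk x xh with hz
  set s := ∑ k, ℓ k * z k with hs
  have hZ0 : 0 ≤ Z := (abs_nonneg _).trans (hZ 0)
  have hsM : |s| ≤ Λ * Z := by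
    calc |s| ≤ ∑ k, |ℓ k * z k| := Finset.abs_sum_le_sum_abs _ _
      _ ≤ ∑ k, |ℓ k| * Z := Finset.sum_le_sum fun k _ => by
          rw [abs_mul]; exact mul_le_mul_of_nonneg_left (hZ k) (abs_nonneg _)
      _ = (∑ k, |ℓ k|) * Z := by rw [Finset.sum_mul]
      _ ≤ Λ * Z := mul_le_mul_of_nonneg_right hleb hZ0
  have hs1 : 1 - Λ * Z ≤ 1 + s := by linarith [neg_abs_le s]
  have hpos : 0 < 1 + s := by linarith
  have hsum : ∑ k, ℓ k = 1 := by
    have h := Lagrange.sum_basis (s := Finset.univ) (v := xh) hxh.injective.injOn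
      Finset.univ_nonempty
    simpa [Polynomial.eval_finsetSum] using congrArg (Polynomial.eval t) h
  have hN : (Lagrange.nodal Finset.univ xh).eval t ≠ 0 := by
    rw [Lagrange.eval_nodal]
    exact Finset.prod_ne_zero_iff.2 fun k _ => sub_ne_zero.2 (ht' k)
  set N := (Lagrange.nodal Finset.univ xh).eval t
  have hw : ∀ k, N * (lam x k / (t - xh k)) = ℓ k * (1 + z k) := fun k => by
    rw [hℓ, hz, lam_eq_mul_one_add_zk x hxh.injective k]
    simp only [eval_basis_eq_lam xh k (ht' k)]
    ring
  have hden : N * ∑ k, lam x k / (t - xh k) = 1 + s := by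
    simp only [Finset.mul_sum, hw, mul_add, mul_one, Finset.sum_add_distrib, hsum, hs]
  have hnum : N * ∑ k, lam x k * y k / (t - xh k) = ∑ k, ℓ k * (1 + z k) * y k := by
    rw [Finset.mul_sum]
    refine Finset.sum_congr rfl fun k _ => ?_
    rw [← hw]
    ring
  refine ⟨fun k => (1 + z k) / (1 + s) * y k, ?_, fun k => ?_⟩
  · rw [secondForm, ← mul_div_mul_left _ _ hN, hden, hnum, Lagrange.interpolate_apply,
      Polynomial.eval_finsetSum, Finset.sum_div]
    refine Finset.sum_congr rfl fun k _ => ?_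
    rw [Polynomial.eval_mul, Polynomial.eval_C]
    simp only [hℓ]
    ring
  · have hdiff : (1 + z k) / (1 + s) * y k - y k = (z k - s) / (1 + s) * y k := by
      field_simp
      ring
    rw [hdiff, abs_mul, abs_div, abs_of_pos hpos]
    refine mul_le_mul_of_nonneg_right ?_ (abs_nonneg _)
    have hzs : |z k - s| ≤ |z k| + Λ * Z := (abs_sub _ _).trans (by linarith)
    exact div_le_div₀ ((abs_nonneg _).trans hzs) hzs (by linarith) hs1
end

section
/- Let x̂₀ < ⋯ < x̂ₙ be real nodes, let z ∈ ℝ^{n+1}, let ĉ_k := (x̂_{k−1} + x̂_k)/2, and set a_{k,j} := (z_j − P_z(ĉ_k))·ℓ_j(ĉ_k). Let L ≥ 0 and suppose y ∈ ℝ^{n+1} satisfies |y_j − y_{j−1}| ≤ L·(x̂_j − x̂_{j−1}) for 1 ≤ j ≤ n. Then for each k ∈ {1, …, n}, |E(ĉ_k; y, z)| ≤ L·Σ_{i=1}^n (x̂_i − x̂_{i−1})·|Σ_{j=i}^n a_{k,j}|. -/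
/-!
With `ℓ_j` the Lagrange basis and `a_j = (z_j - P_z(c)) ℓ_j(c)`, one has
`E(c; y, z) = ∑ j, y_j a_j`. Since `∑ j, ℓ_j = 1`, the coefficients satisfy `∑ j, a_j = 0`, so
summation by parts (`sum_mul_eq_sum_diff_mul_tail`) gives
`E(c; y, z) = ∑ i, (y_{i+1} - y_i) * ∑ j > i, a_j`, and the bound on the increments of `y`
together with the triangle inequality finishes the proof.
-/

/-- The Error Polynomial `E(t; y, z) = P_{yz}(t) - P_y(t)·P_z(t)` for nodes `xh`. -/
noncomputable def errP {n : ℕ} (xh y z : Fin (n + 1) → ℝ) (t : ℝ) : ℝ :=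
  (Lagrange.interpolate Finset.univ xh (fun k => y k * z k)).eval t -
    (Lagrange.interpolate Finset.univ xh y).eval t *
      (Lagrange.interpolate Finset.univ xh z).eval t

/-- The midpoints `ĉ_k = (x̂_{k-1} + x̂_k)/2`; `ch xh k` is the midpoint of the
interval `[x̂_k, x̂_{k+1}]`, i.e. `ĉ_{k+1}` for `k = 0, …, n-1`. -/
noncomputable def ch {n : ℕ} (xh : Fin (n + 1) → ℝ) (k : Fin n) : ℝ :=
  (xh k.castSucc + xh k.succ) / 2

/-- The coefficients `a_{k,j} = (z_j − P_z(ĉ_k))·ℓ_j(ĉ_k)`, with `k : Fin n`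
representing the index `k+1 ∈ {1, …, n}`. -/
noncomputable def coefA {n : ℕ} (xh z : Fin (n + 1) → ℝ) (k : Fin n) (j : Fin (n + 1)) : ℝ :=
  (z j - (Lagrange.interpolate Finset.univ xh z).eval (ch xh k)) *
    (Lagrange.basis Finset.univ xh j).eval (ch xh k)

lemma eq_zero_add_sum_diff {n : ℕ} (y : Fin (n + 1) → ℝ) (j : Fin (n + 1)) :
    y j = y 0 + ∑ i : Fin n, if (i : ℕ) + 1 ≤ (j : ℕ) then y i.succ - y i.castSucc else 0 := by
  induction j using Fin.induction with
  | zero => simp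
  | succ j ih =>
    have h : ∀ i : Fin n,
        (if (i : ℕ) + 1 ≤ (j.succ : ℕ) then y i.succ - y i.castSucc else 0) =
          (if (i : ℕ) + 1 ≤ (j.castSucc : ℕ) then y i.succ - y i.castSucc else 0) +
            if i = j then y i.succ - y i.castSucc else 0 := by
      intro i
      simp only [Fin.val_succ, Fin.val_castSucc, Fin.ext_iff]
      split_ifs <;> first | omega | simp
    simp only [h, Finset.sum_add_distrib, Finset.sum_ite_eq', Finset.mem_univ, if_true]
    linarith

/-- Summation by parts against weights of total sum zero. -/
lemma sum_mul_eq_sum_diff_mul_tail {n : ℕ} (y a : Fin (n + 1) → ℝ) (ha : ∑ j, a j = 0) :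
    ∑ j, y j * a j = ∑ i : Fin n, (y i.succ - y i.castSucc) *
      ∑ j ∈ Finset.univ.filter (fun j : Fin (n + 1) => (i : ℕ) + 1 ≤ (j : ℕ)), a j := by
  calc ∑ j, y j * a j
      = ∑ j, (y 0 * a j + ∑ i : Fin n,
          (if (i : ℕ) + 1 ≤ (j : ℕ) then y i.succ - y i.castSucc else 0) * a j) := by
        refine Finset.sum_congr rfl fun j _ => ?_
        rw [eq_zero_add_sum_diff y j, add_mul, Finset.sum_mul]
    _ = _ := by
        rw [Finset.sum_add_distrib, ← Finset.mul_sum, ha, mul_zero, zero_add, Finset.sum_comm]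
        refine Finset.sum_congr rfl fun i _ => ?_
        rw [Finset.sum_filter, Finset.mul_sum]
        refine Finset.sum_congr rfl fun j _ => ?_
        split_ifs <;> simp

lemma eval_interpolate_eq_sum {n : ℕ} (xh y : Fin (n + 1) → ℝ) (t : ℝ) :
    (Lagrange.interpolate Finset.univ xh y).eval t =
      ∑ j, y j * (Lagrange.basis Finset.univ xh j).eval t := by
  simp [Lagrange.interpolate_apply, Polynomial.eval_finsetSum]

lemma sum_coefA_eq_zero {n : ℕ} (xh z : Fin (n + 1) → ℝ) (hxh : StrictMono xh) (k : Fin n) :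
    ∑ j, coefA xh z k j = 0 := by
  have h1 : ∑ j, (Lagrange.basis Finset.univ xh j).eval (ch xh k) = 1 := by
    rw [← Polynomial.eval_finsetSum,
      Lagrange.sum_basis hxh.injective.injOn Finset.univ_nonempty, Polynomial.eval_one]
  simp only [coefA, sub_mul, Finset.sum_sub_distrib, ← Finset.mul_sum, h1]
  rw [eval_interpolate_eq_sum]
  ring

lemma errP_eq_sum_coefA {n : ℕ} (xh y z : Fin (n + 1) → ℝ) (k : Fin n) :
    errP xh y z (ch xh k) = ∑ j, y j * coefA xh z k j := by
  rw [errP, eval_interpolate_eq_sum xh (fun k => y k * z k), eval_interpolate_eq_sum xh y,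
    Finset.sum_mul, ← Finset.sum_sub_distrib]
  refine Finset.sum_congr rfl fun j _ => ?_
  rw [coefA]
  ring

theorem stmt_8 {n : ℕ} (xh z y : Fin (n + 1) → ℝ) (hxh : StrictMono xh)
    (L : ℝ) (hL : 0 ≤ L)
    (hy : ∀ j : Fin n, |y j.succ - y j.castSucc| ≤ L * (xh j.succ - xh j.castSucc))
    (k : Fin n) :
    |errP xh y z (ch xh k)| ≤
      L * ∑ i : Fin n, (xh i.succ - xh i.castSucc) *
        |∑ j ∈ Finset.univ.filter (fun j : Fin (n + 1) => (i : ℕ) + 1 ≤ (j : ℕ)),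
          coefA xh z k j| := by
  rw [errP_eq_sum_coefA, sum_mul_eq_sum_diff_mul_tail y _ (sum_coefA_eq_zero xh z hxh k),
    Finset.mul_sum]
  refine (Finset.abs_sum_le_sum_abs _ _).trans (Finset.sum_le_sum fun i _ => ?_)
  rw [abs_mul, ← mul_assoc]
  exact mul_le_mul_of_nonneg_right (hy i) (abs_nonneg _)
end

section
/- Let x₀ < ⋯ < xₙ be real nodes, let x̂₀ = x₀ < x̂₁ < ⋯ < x̂_{n−1} < x̂ₙ = xₙ, let y, z ∈ ℝ^{n+1} with z_k = z_k(x, x̂), let ĉ_k := (x̂_{k−1} + x̂_k)/2, let v̂ be the family consisting of the x̂_k and the ĉ_k, and set a_{k,j} := (z_j − P_z(ĉ_k))·ℓ_j(ĉ_k). Then max_{t ∈ [x₀, xₙ]} |E(t; y, z)| ≤ Λ(v̂)·(max_{1≤k≤n} |y_k − y_{k−1}|/(x̂_k − x̂_{k−1}))·b_n(x̂, z), where b_n(x̂, z) := max_{1≤k≤n} Σ_{i=1}^n (x̂_i − x̂_{i−1})·|Σ_{j=i}^n a_{k,j}| and Λ(v̂) is the Lebesgue constant of the 2n+1 points v̂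 over [x₀, xₙ]. -/
/-- The quantity `b_n(x̂, z) = max_{1≤k≤n} ∑_{i=1}^n (x̂_i − x̂_{i-1})·|∑_{j=i}^n a_{k,j}|`. -/
noncomputable def bn {n : ℕ} (hn0 : 0 < n) (xh z : Fin (n + 1) → ℝ) : ℝ :=
  Finset.univ.sup' ⟨⟨0, hn0⟩, Finset.mem_univ _⟩ fun k : Fin n =>
    ∑ i : Fin n, (xh i.succ - xh i.castSucc) *
      |∑ j ∈ Finset.univ.filter (fun j : Fin (n + 1) => (i : ℕ) + 1 ≤ (j : ℕ)),
        coefA xh z k j|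

open Finset Polynomial

lemma ch_mem_gap {n : ℕ} {xh : Fin (n + 1) → ℝ} (hxh : StrictMono xh) (k : Fin n) :
    xh k.castSucc < ch xh k ∧ ch xh k < xh k.succ := by
  have := hxh (Fin.castSucc_lt_succ (i := k))
  unfold ch
  constructor <;> linarith

/-- The points `v̂` are pairwise distinct, since each midpoint lies strictly between two
consecutive nodes. -/
lemma injective_nodes {n : ℕ} {xh : Fin (n + 1) → ℝ} (hxh : StrictMono xh) :
    Function.Injective (Sum.elim xh (ch xh) : Fin (n + 1) ⊕ Fin n → ℝ) := by
  have hch : StrictMono (ch xh) := by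
    intro a b hab
    have h1 := hxh (Fin.castSucc_lt_castSucc_iff.mpr hab)
    have h2 := hxh (Fin.succ_lt_succ_iff.mpr hab)
    unfold ch
    linarith
  refine hxh.injective.sumElim hch.injective fun a k h => ?_
  obtain ⟨h1, h2⟩ := ch_mem_gap hxh k
  rw [← h] at h1 h2
  have h1 := hxh.lt_iff_lt.mp h1
  have h2 := hxh.lt_iff_lt.mp h2
  simp only [Fin.lt_def, Fin.val_castSucc, Fin.val_succ] at h1 h2
  omega

lemma eval_interpolate_eq_sum_s9 {ι : Type*} [Fintype ι] [DecidableEq ι] (v r : ι → ℝ) (t : ℝ) :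
    (Lagrange.interpolate univ v r).eval t
      = ∑ k, r k * (Lagrange.basis univ v k).eval t := by
  simp [Lagrange.interpolate_apply, eval_finsetSum]

lemma eval_eq_sum_basis {ι : Type*} [Fintype ι] [DecidableEq ι] {v : ι → ℝ}
    (hv : Function.Injective v) {f : ℝ[X]} (hf : f.degree < Fintype.card ι) (t : ℝ) :
    f.eval t = ∑ k, f.eval (v k) * (Lagrange.basis univ v k).eval t := by
  rw [← eval_interpolate_eq_sum_s9 v (fun k => f.eval (v k)) t,
    ← Lagrange.eq_interpolate hv.injOn (by simpa using hf)]

/-- The error polynomial as an element of `ℝ[X]`. -/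
noncomputable def errPoly {n : ℕ} (xh y z : Fin (n + 1) → ℝ) : ℝ[X] :=
  Lagrange.interpolate univ xh (fun k => y k * z k) -
    Lagrange.interpolate univ xh y * Lagrange.interpolate univ xh z

lemma eval_errPoly {n : ℕ} (xh y z : Fin (n + 1) → ℝ) (t : ℝ) :
    (errPoly xh y z).eval t = errP xh y z t := by
  simp [errPoly, errP]

lemma natDegree_interpolate_le {n : ℕ} {xh : Fin (n + 1) → ℝ} (hxh : StrictMono xh)
    (r : Fin (n + 1) → ℝ) : (Lagrange.interpolate univ xh r).natDegree ≤ n := by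
  have h := Lagrange.degree_interpolate_le (s := univ) r hxh.injective.injOn
  exact natDegree_le_of_degree_le (by simpa using h)

lemma degree_errPoly_lt {n : ℕ} {xh : Fin (n + 1) → ℝ} (hxh : StrictMono xh)
    (y z : Fin (n + 1) → ℝ) :
    (errPoly xh y z).degree < Fintype.card (Fin (n + 1) ⊕ Fin n) := by
  have h1 := natDegree_interpolate_le hxh (fun k => y k * z k)
  have h2 := natDegree_mul_le_of_le (natDegree_interpolate_le hxh y)
    (natDegree_interpolate_le hxh z)
  have h3 : (errPoly xh y z).natDegree ≤ n + n :=
    (natDegree_sub_le_of_le h1 h2).trans (by simp)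
  refine (degree_le_of_natDegree_le h3).trans_lt ?_
  simp only [Fintype.card_sum, Fintype.card_fin]
  exact_mod_cast (by omega : n + n < n + 1 + n)

lemma errP_node {n : ℕ} {xh : Fin (n + 1) → ℝ} (hxh : StrictMono xh)
    (y z : Fin (n + 1) → ℝ) (k : Fin (n + 1)) : errP xh y z (xh k) = 0 := by
  simp only [errP, Lagrange.eval_interpolate_at_node _ hxh.injective.injOn (mem_univ k), sub_self]

/-- Summation by parts for coefficients of total sum zero. -/
lemma sum_mul_by_parts {n : ℕ} (a y : Fin (n + 1) → ℝ) (ha : ∑ j, a j = 0) :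
    ∑ j, a j * y j = ∑ i : Fin n, (y i.succ - y i.castSucc) *
      ∑ j ∈ univ.filter (fun j : Fin (n + 1) => (i : ℕ) + 1 ≤ (j : ℕ)), a j := by
  have tele : ∀ j : Fin (n + 1), y j = y 0 + ∑ i : Fin n,
      if (i : ℕ) + 1 ≤ (j : ℕ) then y i.succ - y i.castSucc else 0 := by
    intro j
    induction j using Fin.induction with
    | zero => simp
    | succ m ih =>
      have : ∀ i : Fin n, (if (i : ℕ) + 1 ≤ (m.succ : ℕ) then y i.succ - y i.castSucc else 0)
          = (if (i : ℕ) + 1 ≤ (m.castSucc : ℕ) then y i.succ - y i.castSucc else 0)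
            + if i = m then y i.succ - y i.castSucc else 0 := by
        intro i
        by_cases him : i = m
        · subst him; simp
        · have : (i : ℕ) ≠ m := fun h => him (Fin.ext h)
          have h : ((i : ℕ) + 1 ≤ (m.succ : ℕ)) ↔ ((i : ℕ) + 1 ≤ (m.castSucc : ℕ)) := by
            simp only [Fin.val_succ, Fin.val_castSucc]; omega
          simp only [h, him, if_false, add_zero]
      rw [sum_congr rfl fun i _ => this i, sum_add_distrib, ← add_assoc, ← ih]
      simp
  calc ∑ j, a j * y j
      = ∑ j, (a j * y 0 + ∑ i : Fin n,
          if (i : ℕ) + 1 ≤ (j : ℕ) then (y i.succ - y i.castSucc) * a j else 0) := by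
        refine sum_congr rfl fun j _ => ?_
        rw [tele j, mul_add, mul_sum]
        congr 1
        refine sum_congr rfl fun i _ => ?_
        split_ifs <;> ring
    _ = _ := by
        rw [sum_add_distrib, ← sum_mul, ha, zero_mul, zero_add, sum_comm]
        refine sum_congr rfl fun i _ => ?_
        rw [mul_sum, sum_filter]

lemma sum_coefA {n : ℕ} {xh : Fin (n + 1) → ℝ} (hxh : StrictMono xh)
    (z : Fin (n + 1) → ℝ) (k : Fin n) : ∑ j, coefA xh z k j = 0 := by
  have h1 : ∑ j, (Lagrange.basis univ xh j).eval (ch xh k) = 1 := by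
    rw [← eval_finsetSum, Lagrange.sum_basis hxh.injective.injOn univ_nonempty, eval_one]
  simp only [coefA, sub_mul, sum_sub_distrib, ← mul_sum, h1, mul_one]
  rw [eval_interpolate_eq_sum_s9, sub_self]

lemma errP_ch {n : ℕ} (xh y z : Fin (n + 1) → ℝ) (k : Fin n) :
    errP xh y z (ch xh k) = ∑ j, coefA xh z k j * y j := by
  rw [errP, eval_interpolate_eq_sum_s9 xh (fun k => y k * z k), eval_interpolate_eq_sum_s9 xh y,
    sum_mul, ← sum_sub_distrib]
  refine sum_congr rfl fun j _ => ?_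
  rw [coefA]
  ring

/-- The bound at the midpoints: `|E(ĉ_k)|` is at most the largest slope of `y` times `b_n`. -/
lemma abs_errP_ch_le {n : ℕ} (hn0 : 0 < n) {xh : Fin (n + 1) → ℝ} (hxh : StrictMono xh)
    (y z : Fin (n + 1) → ℝ) {M : ℝ} (hM0 : 0 ≤ M)
    (hM : ∀ k : Fin n, |y k.succ - y k.castSucc| / (xh k.succ - xh k.castSucc) ≤ M)
    (k : Fin n) : |errP xh y z (ch xh k)| ≤ M * bn hn0 xh z := by
  rw [errP_ch, sum_mul_by_parts _ _ (sum_coefA hxh z k)]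
  calc _ ≤ ∑ i : Fin n, M * ((xh i.succ - xh i.castSucc) *
        |∑ j ∈ univ.filter (fun j : Fin (n + 1) => (i : ℕ) + 1 ≤ (j : ℕ)), coefA xh z k j|) := by
        refine (abs_sum_le_sum_abs _ _).trans (sum_le_sum fun i _ => ?_)
        have hpos := sub_pos.mpr (hxh (Fin.castSucc_lt_succ (i := i)))
        rw [abs_mul, ← mul_assoc]
        exact mul_le_mul_of_nonneg_right ((div_le_iff₀ hpos).mp (hM i)) (abs_nonneg _)
    _ ≤ M * bn hn0 xh z := by
        rw [← mul_sum]
        refine mul_le_mul_of_nonneg_left ?_ hM0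
        exact le_sup' (fun k : Fin n => ∑ i : Fin n, (xh i.succ - xh i.castSucc) *
          |∑ j ∈ univ.filter (fun j : Fin (n + 1) => (i : ℕ) + 1 ≤ (j : ℕ)), coefA xh z k j|)
          (mem_univ k)

/-- The supremum defining the Lebesgue constant is an upper bound: the Lebesgue function is
continuous on a compact interval, so the supremum does not take its junk value. -/
lemma le_leb {ι : Type*} [Fintype ι] [DecidableEq ι] (v : ι → ℝ) {a b t : ℝ}
    (ht : t ∈ Set.Icc a b) :
    ∑ k, |(Lagrange.basis univ v k).eval t| ≤ leb v a b := by
  have hc : Continuous fun t : Set.Icc a b =>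
      ∑ k, |(Lagrange.basis univ v k).eval (t : ℝ)| := by fun_prop
  exact le_ciSup (isCompact_range hc).bddAbove ⟨t, ht⟩

theorem stmt_9 {n : ℕ} (hn0 : 0 < n) (x xh y : Fin (n + 1) → ℝ)
    (hx : StrictMono x) (hxh : StrictMono xh)
    (h0 : xh 0 = x 0) (hn : xh (Fin.last n) = x (Fin.last n)) :
    (⨆ t : Set.Icc (x 0) (x (Fin.last n)), |errP xh y (zk x xh) (t : ℝ)|) ≤
      leb (Sum.elim xh (ch xh) : Fin (n + 1) ⊕ Fin n → ℝ) (x 0) (x (Fin.last n)) *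
        (Finset.univ.sup' ⟨⟨0, hn0⟩, Finset.mem_univ _⟩
          fun k : Fin n => |y k.succ - y k.castSucc| / (xh k.succ - xh k.castSucc)) *
        bn hn0 xh (zk x xh) := by
  set z := zk x xh
  set M := Finset.univ.sup' ⟨⟨0, hn0⟩, Finset.mem_univ _⟩
    fun k : Fin n => |y k.succ - y k.castSucc| / (xh k.succ - xh k.castSucc)
  have hM : ∀ k : Fin n, |y k.succ - y k.castSucc| / (xh k.succ - xh k.castSucc) ≤ M :=
    fun k => le_sup' (fun k : Fin n =>
      |y k.succ - y k.castSucc| / (xh k.succ - xh k.castSucc)) (mem_univ k)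
  have hM0 : 0 ≤ M := (div_nonneg (abs_nonneg _)
    (sub_pos.mpr (hxh Fin.castSucc_lt_succ)).le).trans (hM ⟨0, hn0⟩)
  have hmid := abs_errP_ch_le hn0 hxh y z hM0 hM
  have hB0 : 0 ≤ M * bn hn0 xh z := (abs_nonneg _).trans (hmid ⟨0, hn0⟩)
  have : Nonempty (Set.Icc (x 0) (x (Fin.last n))) :=
    ⟨⟨x 0, le_rfl, hx.monotone (Fin.zero_le _)⟩⟩
  refine ciSup_le fun t => ?_
  have hE : ∀ k : Fin (n + 1) ⊕ Fin n,
      |errP xh y z ((Sum.elim xh (ch xh) : Fin (n + 1) ⊕ Fin n → ℝ) k)| ≤ M * bn hn0 xh z := by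
    rintro (k | k)
    · simpa [errP_node hxh] using hB0
    · exact hmid k
  rw [← eval_errPoly, eval_eq_sum_basis (injective_nodes hxh) (degree_errPoly_lt hxh y z),
    mul_assoc]
  refine (abs_sum_le_sum_abs _ _).trans ?_
  refine le_trans ?_ (mul_le_mul_of_nonneg_right (le_leb _ t.2) hB0)
  rw [sum_mul]
  refine sum_le_sum fun k _ => ?_
  rw [abs_mul, eval_errPoly, mul_comm]
  exact mul_le_mul_of_nonneg_left (hE k) (abs_nonneg _)
end

section
/- Let v ∈ ℝⁿ satisfy ‖v‖₁ := Σ_{k=1}^n |v_k| < 1 and set s := Σ_{k=1}^n v_k. Then −(‖v‖₁²/(1 − ‖v‖₁)³)·(1 + ‖v‖₁²/4) ≤ ∏_{k=1}^n (1 + v_k) − (1 + s) ≤ s²/(1 − s). -/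
/-!
Both bounds come from `1 + x ≤ exp x ≤ 1 / (1 - x)` for `x < 1`, together with
`1 / (1 - x) = 1 + x + x ^ 2 / (1 - x)`.
The upper bound is `∏ (1 + v k) ≤ exp s ≤ 1 / (1 - s)`. For the lower bound, the terms of degree at
least two in the expansion of `∏ (1 + v k)` are dominated by those of `∏ (1 + |v k|)`
(`abs_prod_one_add_sub_le`), so with `t = ∑ |v k|` the difference is at least `-t ^ 2 / (1 - t)`,
which is stronger than the claimed bound.
-/

/-- The error of first order is dominated by the one for `|v k|`. The error of order zero is
carried along because the induction step multiplies it by the new entry. -/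
theorem abs_prod_one_add_sub_le {ι : Type*} (S : Finset ι) (v : ι → ℝ) :
    |∏ k ∈ S, (1 + v k) - 1| ≤ ∏ k ∈ S, (1 + |v k|) - 1 ∧
      |∏ k ∈ S, (1 + v k) - (1 + ∑ k ∈ S, v k)| ≤
        ∏ k ∈ S, (1 + |v k|) - (1 + ∑ k ∈ S, |v k|) := by
  classical
  induction S using Finset.induction_on with
  | empty => simp
  | insert a S ha ih =>
    obtain ⟨ih1, ih2⟩ := ih
    simp only [Finset.prod_insert ha, Finset.sum_insert ha]
    set P := ∏ k ∈ S, (1 + v k)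
    set Q := ∏ k ∈ S, (1 + |v k|)
    have hmul : |v a * (P - 1)| ≤ |v a| * (Q - 1) := by
      rw [abs_mul]
      exact mul_le_mul_of_nonneg_left ih1 (abs_nonneg _)
    have ha1 := neg_abs_le (v a)
    have ha2 := le_abs_self (v a)
    rw [abs_le] at hmul ih1 ih2
    constructor <;> rw [abs_le] <;> constructor <;> linarith [hmul.1, hmul.2, ih1.1, ih1.2, ih2.1, ih2.2]

theorem prod_one_add_sub_le {ι : Type*} (S : Finset ι) (v : ι → ℝ)
    (hv : ∀ k ∈ S, 0 ≤ 1 + v k) (hs : ∑ k ∈ S, v k < 1) :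
    ∏ k ∈ S, (1 + v k) - (1 + ∑ k ∈ S, v k) ≤ (∑ k ∈ S, v k) ^ 2 / (1 - ∑ k ∈ S, v k) := by
  have hP : ∏ k ∈ S, (1 + v k) ≤ Real.exp (∑ k ∈ S, v k) := by
    rw [Real.exp_sum]
    exact Finset.prod_le_prod hv fun k _ => by linarith [Real.add_one_le_exp (v k)]
  set s := ∑ k ∈ S, v k
  have hE : Real.exp s * (1 - s) ≤ 1 := by
    have h := mul_le_mul_of_nonneg_left (Real.one_sub_le_exp_neg s) (Real.exp_pos s).le
    rwa [← Real.exp_add, add_neg_cancel, Real.exp_zero] at h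
  have hpos : 0 < 1 - s := by linarith
  rw [le_div_iff₀ hpos]
  nlinarith [mul_le_mul_of_nonneg_right hP hpos.le]

theorem stmt_13 {n : ℕ} (v : Fin n → ℝ) (h1 : ∑ k, |v k| < 1) :
    -((∑ k, |v k|) ^ 2 / (1 - ∑ k, |v k|) ^ 3) * (1 + (∑ k, |v k|) ^ 2 / 4) ≤
        (∏ k, (1 + v k)) - (1 + ∑ k, v k) ∧
      (∏ k, (1 + v k)) - (1 + ∑ k, v k) ≤ (∑ k, v k) ^ 2 / (1 - ∑ k, v k) := by
  constructor
  · have hA := (abs_le.1 (abs_prod_one_add_sub_le Finset.univ v).2).1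
    have hB := prod_one_add_sub_le Finset.univ (fun k => |v k|)
      (fun k _ => by positivity) h1
    have ht : 0 ≤ ∑ k, |v k| := Finset.sum_nonneg fun k _ => abs_nonneg _
    set t := ∑ k, |v k|
    have hpos : 0 < 1 - t := by linarith
    have hC : t ^ 2 / (1 - t) ≤ t ^ 2 / (1 - t) ^ 3 := by
      apply div_le_div_of_nonneg_left (by positivity) (by positivity)
      exact pow_le_of_le_one hpos.le (by linarith) (by norm_num)
    have hD : 0 ≤ t ^ 2 / (1 - t) ^ 3 * (t ^ 2 / 4) := by positivity
    linarith
  · refine prod_one_add_sub_le Finset.univ v (fun k hk => ?_)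
      ((Finset.sum_le_sum fun k _ => le_abs_self (v k)).trans_lt h1)
    have h := Finset.single_le_sum (f := fun k => |v k|) (fun k _ => abs_nonneg _) hk
    linarith [neg_abs_le (v k)]
end

section
/- Let n ≥ 2 and let x_j = −cos(jπ/n) be the Chebyshev points of the second kind. Then for every integer k with 1 ≤ k ≤ n/2, Σ_{j=k+1}^{n} 1/(x_j − x_k) ≤ (3n²/(4√2·k))·log(4k + 1), where log is the natural logarithm. -/
/-!
Since `x j - x k = 2 sin ((j+k)π/2n) sin ((j-k)π/2n)`, where the second angle lies in `[0, π/2]` and,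
because `2k ≤ n`, the first lies in `[0, 3π/4]`, concavity of the sine bounds the two factors below
by `(√2/3)(j+k)/n` and `(j-k)/n`. Hence `x j - x k ≥ (2√2/3)(j²-k²)/n²`.
The sum of `1/(j²-k²)` over `j > k` telescopes to at most `H_{2k}/(2k)`, and the harmonic numbers
satisfy `H_m ≤ log (2m+1)`.
-/

/-- The harmonic numbers satisfy `H_m ≤ log (2m+1)`; each step is the inequality
`2x/(x+2) ≤ log (1+x)` at `x = 2/(2m+1)`. -/
lemma harmonic_sum_le_log (m : ℕ) :
    ∑ i ∈ Finset.range m, 1 / ((i : ℝ) + 1) ≤ Real.log (2 * m + 1) := by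
  induction m with
  | zero => simp
  | succ m ih =>
    rw [Finset.sum_range_succ]
    have hm : (0 : ℝ) ≤ m := Nat.cast_nonneg m
    have h := Real.le_log_one_add_of_nonneg (x := 2 / (2 * (m : ℝ) + 1)) (by positivity)
    have e1 : 2 * (2 / (2 * (m : ℝ) + 1)) / (2 / (2 * (m : ℝ) + 1) + 2) = 1 / ((m : ℝ) + 1) := by
      field_simp
      ring
    have e2 : (2 * ((m + 1 : ℕ) : ℝ) + 1) = (2 * m + 1) * (1 + 2 / (2 * (m : ℝ) + 1)) := by
      push_cast
      field_simp
      ring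
    rw [e1] at h
    rw [e2, Real.log_mul (by positivity) (by positivity)]
    linarith

/-- The partial fractions `2k/(j²-k²) = 1/(j-k) - 1/(j+k)` telescope, with `j = k + i + 1`. -/
lemma sum_inv_sq_sub_sq (k m : ℕ) (hk : 1 ≤ k) :
    ∑ i ∈ Finset.range m, 1 / (((i : ℝ) + 1) * (2 * k + i + 1)) =
      (∑ i ∈ Finset.range (2 * k), 1 / ((i : ℝ) + 1) -
        ∑ i ∈ Finset.range (2 * k), 1 / ((m : ℝ) + i + 1)) / (2 * k) := by
  have hk' : (0 : ℝ) < k := by exact_mod_cast hk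
  induction m with
  | zero => simp
  | succ m ih =>
    rw [Finset.sum_range_succ, ih]
    have h := Finset.sum_range_sub (fun i : ℕ => 1 / ((m : ℝ) + i + 1)) (2 * k)
    rw [Finset.sum_sub_distrib] at h
    have e : ∑ i ∈ Finset.range (2 * k), 1 / (((m + 1 : ℕ) : ℝ) + i + 1) =
        ∑ i ∈ Finset.range (2 * k), 1 / ((m : ℝ) + ((i + 1 : ℕ) : ℝ) + 1) := by
      refine Finset.sum_congr rfl fun i _ => ?_
      push_cast
      ring
    rw [← e] at h
    have e' : ∑ i ∈ Finset.range (2 * k), 1 / (((m + 1 : ℕ) : ℝ) + i + 1) =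
        ∑ i ∈ Finset.range (2 * k), 1 / ((m : ℝ) + i + 1) + 1 / ((m : ℝ) + 2 * k + 1)
          - 1 / ((m : ℝ) + 1) := by
      push_cast at h ⊢
      simp only [add_zero] at h
      linarith
    rw [e']
    field_simp
    ring

/-- Concavity of the sine on `[0, 3π/4]`, in the variable `u = 2t/π`. -/
lemma sin_ge_three_quarters {u : ℝ} (h0 : 0 ≤ u) (h1 : u ≤ 3 / 2) :
    Real.sqrt 2 / 3 * u ≤ Real.sin (u * Real.pi / 2) := by
  have hpi := Real.pi_pos
  have h := strictConcaveOn_sin_Icc.concaveOn.2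
    (show (0 : ℝ) ∈ Set.Icc 0 Real.pi from ⟨le_rfl, hpi.le⟩)
    (show 3 * Real.pi / 4 ∈ Set.Icc 0 Real.pi from ⟨by positivity, by linarith⟩)
    (show 0 ≤ 1 - 2 * u / 3 by linarith) (show 0 ≤ 2 * u / 3 by positivity) (by ring)
  have hs : Real.sin (3 * Real.pi / 4) = Real.sqrt 2 / 2 := by
    rw [show 3 * Real.pi / 4 = Real.pi - Real.pi / 4 by ring, Real.sin_pi_sub,
      Real.sin_pi_div_four]
  simp only [smul_eq_mul, Real.sin_zero, mul_zero, zero_add, hs] at h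
  rw [show 2 * u / 3 * (3 * Real.pi / 4) = u * Real.pi / 2 by ring] at h
  linarith

lemma chebyshev_gap (n k i : ℕ) (hn : 2 ≤ n) (hk2 : 2 * k ≤ n) (hi : k + i + 1 ≤ n) :
    2 * Real.sqrt 2 / 3 * (((i : ℝ) + 1) * (2 * k + i + 1)) / n ^ 2 ≤
      -Real.cos (((k + 1 + i : ℕ) : ℝ) * Real.pi / n) - -Real.cos (k * Real.pi / n) := by
  have hn' : (0 : ℝ) < n := by exact_mod_cast (by omega : 0 < n)
  have hk2' : 2 * (k : ℝ) ≤ n := by exact_mod_cast hk2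
  have hi' : (k : ℝ) + i + 1 ≤ n := by exact_mod_cast hi
  have hk0 : (0 : ℝ) ≤ k := Nat.cast_nonneg k
  have hpi := Real.pi_pos
  have hA := sin_ge_three_quarters (u := (2 * k + i + 1) / n) (by positivity)
    (by rw [div_le_iff₀ hn']; linarith)
  have hv : ((i : ℝ) + 1) / n ≤ 1 := by rw [div_le_iff₀ hn']; linarith
  have hB := Real.mul_le_sin (x := ((i : ℝ) + 1) / n * Real.pi / 2) (by positivity)
    (by nlinarith)
  rw [show 2 / Real.pi * (((i : ℝ) + 1) / n * Real.pi / 2) = ((i : ℝ) + 1) / n by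
    field_simp] at hB
  have hcos := Real.cos_sub_cos (k * Real.pi / n) (((k + 1 + i : ℕ) : ℝ) * Real.pi / n)
  have e1 : (k * Real.pi / n + ((k + 1 + i : ℕ) : ℝ) * Real.pi / n) / 2 =
      (2 * k + i + 1) / n * Real.pi / 2 := by push_cast; ring
  have e2 : (k * Real.pi / n - ((k + 1 + i : ℕ) : ℝ) * Real.pi / n) / 2 =
      -(((i : ℝ) + 1) / n * Real.pi / 2) := by push_cast; ring
  rw [e1, e2, Real.sin_neg] at hcos
  have hmul := mul_le_mul hA hB (by positivity) (le_trans (by positivity) hA)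
  have e3 : 2 * Real.sqrt 2 / 3 * (((i : ℝ) + 1) * (2 * k + i + 1)) / n ^ 2 =
      2 * (Real.sqrt 2 / 3 * ((2 * k + i + 1) / n) * (((i : ℝ) + 1) / n)) := by
    field_simp
  rw [e3]
  linarith

theorem stmt_15 {n : ℕ} (hn : 2 ≤ n) (x : ℕ → ℝ)
    (hx : ∀ j, x j = -Real.cos (j * Real.pi / n))
    (k : ℕ) (hk1 : 1 ≤ k) (hk2 : 2 * k ≤ n) :
    (∑ j ∈ Finset.Icc (k + 1) n, 1 / (x j - x k)) ≤
      3 * n ^ 2 / (4 * Real.sqrt 2 * k) * Real.log (4 * k + 1) := by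
  have hn' : (0 : ℝ) < n := by exact_mod_cast (by omega : 0 < n)
  have hk' : (0 : ℝ) < k := by exact_mod_cast hk1
  have hs : (0 : ℝ) < Real.sqrt 2 := by positivity
  rw [← Finset.Ico_succ_right_eq_Icc, Finset.sum_Ico_eq_sum_range,
    show Order.succ n - (k + 1) = n - k by simp]
  calc ∑ i ∈ Finset.range (n - k), 1 / (x (k + 1 + i) - x k)
      ≤ ∑ i ∈ Finset.range (n - k),
          3 * n ^ 2 / (2 * Real.sqrt 2) * (1 / (((i : ℝ) + 1) * (2 * k + i + 1))) := by
        refine Finset.sum_le_sum fun i hi => ?_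
        have hi := Finset.mem_range.1 hi
        rw [hx, hx]
        refine (one_div_le_one_div_of_le (by positivity)
          (chebyshev_gap n k i hn hk2 (by omega))).trans_eq ?_
        field_simp
    _ = 3 * n ^ 2 / (2 * Real.sqrt 2) *
          ((∑ i ∈ Finset.range (2 * k), 1 / ((i : ℝ) + 1) -
            ∑ i ∈ Finset.range (2 * k), 1 / (((n - k : ℕ) : ℝ) + i + 1)) / (2 * k)) := by
        rw [← Finset.mul_sum, sum_inv_sq_sub_sq k _ hk1]
    _ ≤ 3 * n ^ 2 / (2 * Real.sqrt 2) * (Real.log (4 * k + 1) / (2 * k)) := by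
        have h := harmonic_sum_le_log (2 * k)
        have h0 : 0 ≤ ∑ i ∈ Finset.range (2 * k), 1 / (((n - k : ℕ) : ℝ) + i + 1) :=
          Finset.sum_nonneg fun i _ => by positivity
        rw [show 2 * ((2 * k : ℕ) : ℝ) + 1 = 4 * k + 1 by push_cast; ring] at h
        gcongr
        linarith
    _ = _ := by
        field_simp
        ring
end
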